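/- arXiv:0809.2427 — 2 statements merged into one kernel-verified Lean document; each statement's English description precedes it below -/
import Mathlib

section
/- Let V be a complex inner product space, let u ∈ {−1, ω̄}, and let x_1, x_2, x_3 ∈ V satisfy |x_1|² = |x_2|² = |x_3|² = 3, ⟨x_1,x_2⟩ = −p, ⟨x_2,x_3⟩ = −p, and ⟨x_1,x_3⟩ = −u·p (the circuit diagram Circ_{3,u}). Set x_3' = x_2 − ū·x_3, where ū = conj(u). Then: |x_3'|² = 3, ⟨x_1,x_3'⟩ = 0, and ⟨x_2,x_3'⟩ = 3 + ū·p, which is a unit multiple of p (namely −ωp if u = −1 and p if u = ω̄); moreover {x_1, x_2, x_3'} generates the same ℤ[ω]-submodule of V as {x_1, x_2, x_3}. (Hence the lattices L(Circ_{3,−1}) and L(Circ_{3,ω̄}) are isometric to E_6^ℰ.) -/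
/- The circuit diagrams Circ_{3,-1} and Circ_{3,ω̄} are equivalent to the
   linear E₆ᵉ diagram: replacing x₃ by x₃' = x₂ - ū x₃ gives an orthogonal
   pair (x₁, x₃') with the stated inner products, generating the same
   ℤ[ω]-submodule. -/

open scoped ComplexInnerProductSpace

set_option synthInstance.maxHeartbeats 1000000
set_option maxHeartbeats 1000000

/-- `ω = e^{2πi/3}`. -/
noncomputable def ω : ℂ := Complex.exp (2 * Real.pi * Complex.I / 3)

/-- `p = 1 - ω̄`. -/
noncomputable def p : ℂ := 1 - starRingEnd ℂ ω

/-- The ring of Eisenstein integers `ℤ[ω]`, as a subring of `ℂ`. -/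
noncomputable def Eis : Subring ℂ := Subring.closure {ω}

theorem om_cube : ω ^ 3 = 1 := by
  unfold ω
  rw [← Complex.exp_nat_mul]
  rw [← Complex.exp_two_pi_mul_I]
  congr 1
  push_cast
  ring

theorem om_ne : ω ≠ 1 := by
  have h := Complex.isPrimitiveRoot_exp 3 (by norm_num)
  have h' := h.ne_one (by norm_num)
  unfold ω
  simpa using h'

theorem om_sq : ω ^ 2 = -1 - ω := by
  have h : (ω - 1) * (ω ^ 2 + ω + 1) = 0 := by linear_combination om_cube
  rcases mul_eq_zero.mp h with h | h
  · exact absurd (sub_eq_zero.mp h) om_ne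
  · linear_combination h

theorem om_conj : starRingEnd ℂ ω = -1 - ω := by
  have hn : ‖ω‖ = 1 := Complex.norm_eq_one_of_pow_eq_one om_cube (by norm_num)
  have h : ω * starRingEnd ℂ ω = 1 := by
    rw [Complex.mul_conj']
    simp [hn]
  have h0 : ω ≠ 0 := by
    intro h0
    simp [h0] at h
  apply mul_left_cancel₀ h0
  linear_combination h + om_sq

theorem om_mem : ω ∈ Eis := Subring.subset_closure rfl

theorem circ3_equiv_E6
    {V : Type*} [NormedAddCommGroup V] [InnerProductSpace ℂ V]
    (u : ℂ) (hu : u = -1 ∨ u = starRingEnd ℂ ω)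
    (x₁ x₂ x₃ : V)
    (h1 : ⟪x₁, x₁⟫ = 3) (h2 : ⟪x₂, x₂⟫ = 3) (h3 : ⟪x₃, x₃⟫ = 3)
    (h12 : ⟪x₁, x₂⟫ = -p) (h23 : ⟪x₂, x₃⟫ = -p) (h13 : ⟪x₁, x₃⟫ = -(u * p)) :
    ⟪x₂ - starRingEnd ℂ u • x₃, x₂ - starRingEnd ℂ u • x₃⟫ = 3 ∧
    ⟪x₁, x₂ - starRingEnd ℂ u • x₃⟫ = 0 ∧
    ⟪x₂, x₂ - starRingEnd ℂ u • x₃⟫ = 3 + starRingEnd ℂ u * p ∧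
    (u = -1 → 3 + starRingEnd ℂ u * p = -(ω * p)) ∧
    (u = starRingEnd ℂ ω → 3 + starRingEnd ℂ u * p = p) ∧
    Submodule.span Eis ({x₁, x₂, x₂ - starRingEnd ℂ u • x₃} : Set V) =
      Submodule.span Eis ({x₁, x₂, x₃} : Set V) := by
  have hpc : p = 2 + ω := by
    unfold p
    rw [om_conj]
    ring
  have hpb : starRingEnd ℂ p = 1 - ω := by
    rw [hpc, map_add, om_conj, map_ofNat]
    ring
  have h32 : ⟪x₃, x₂⟫ = -(1 - ω) := by
    rw [← inner_conj_symm, h23, map_neg, hpb]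
  have huu : u * starRingEnd ℂ u = 1 := by
    rcases hu with rfl | rfl
    · simp
    · rw [Complex.conj_conj, om_conj]
      linear_combination -om_sq
  have hue : u ∈ Eis := by
    rcases hu with rfl | rfl
    · exact neg_mem (one_mem _)
    · rw [om_conj]
      exact sub_mem (neg_mem (one_mem _)) om_mem
  have hce : starRingEnd ℂ u ∈ Eis := by
    rcases hu with rfl | rfl
    · rw [map_neg, map_one]
      exact neg_mem (one_mem _)
    · rw [Complex.conj_conj]
      exact om_mem
  refine ⟨?_, ?_, ?_, ?_, ?_, ?_⟩
  · simp only [inner_sub_left, inner_sub_right, inner_smul_left, inner_smul_right, h2, h3, h23,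
      h32, Complex.conj_conj, hpc]
    rcases hu with rfl | rfl
    · simp only [map_neg, map_one]
      ring
    · rw [Complex.conj_conj, om_conj]
      linear_combination (-1 : ℂ) * om_sq
  · simp only [inner_sub_right, inner_smul_right, h12, h13]
    linear_combination p * huu
  · simp only [inner_sub_right, inner_smul_right, h2, h23]
    ring
  · rintro rfl
    rw [map_neg, map_one, hpc]
    linear_combination om_sq
  · rintro rfl
    rw [Complex.conj_conj, hpc]
    linear_combination om_sq
  · apply le_antisymm
    · rw [Submodule.span_le]
      have m1 : x₁ ∈ Submodule.span Eis ({x₁, x₂, x₃} : Set V) :=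
        Submodule.subset_span (by simp)
      have m2 : x₂ ∈ Submodule.span Eis ({x₁, x₂, x₃} : Set V) :=
        Submodule.subset_span (by simp)
      have m3 : x₃ ∈ Submodule.span Eis ({x₁, x₂, x₃} : Set V) :=
        Submodule.subset_span (by simp)
      rintro y (rfl | rfl | rfl)
      · exact m1
      · exact m2
      · exact Submodule.sub_mem _ m2
          (Submodule.smul_mem _ (⟨starRingEnd ℂ u, hce⟩ : Eis) m3)
    · rw [Submodule.span_le]
      set z := x₂ - starRingEnd ℂ u • x₃ with hz
      have m1 : x₁ ∈ Submodule.span Eis ({x₁, x₂, z} : Set V) :=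
        Submodule.subset_span (by simp)
      have m2 : x₂ ∈ Submodule.span Eis ({x₁, x₂, z} : Set V) :=
        Submodule.subset_span (by simp)
      have m3 : z ∈ Submodule.span Eis ({x₁, x₂, z} : Set V) :=
        Submodule.subset_span (by simp)
      have hx : x₃ = u • (x₂ - z) := by
        rw [hz, sub_sub_cancel, smul_smul, huu, one_smul]
      have m4 : x₃ ∈ Submodule.span Eis ({x₁, x₂, z} : Set V) := by
        have := Submodule.smul_mem _ (⟨u, hue⟩ : Eis) (Submodule.sub_mem _ m2 m3)
        rw [hx]
        exact this
      intro y hy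
      rcases hy with h | h | h
      · rw [h]; exact m1
      · rw [h]; exact m2
      · rw [h]; exact m4
end

section
/- Let V be a complex inner product space and let x, y ∈ V be linearly independent vectors with |x|² = |y|² = 3 and ⟨x,y⟩ ∈ θℤ[ω]. Then exactly one of the following holds: either ⟨x,y⟩ = 0, in which case the ω-reflections satisfy φ_x φ_y = φ_y φ_x; or |⟨x,y⟩|² = 3 (i.e. ⟨x,y⟩ = θ·e for a unit e of ℤ[ω]), in which case φ_x φ_y φ_x = φ_y φ_x φ_y. -/
/- For linearly independent norm-3 vectors x, y with ⟨x,y⟩ ∈ θℤ[ω], exactly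
   one of the following holds: ⟨x,y⟩ = 0 and the ω-reflections in x and y
   commute, or |⟨x,y⟩|² = 3 (i.e. ⟨x,y⟩ = θe for a unit e of ℤ[ω]) and the
   ω-reflections braid. -/

open scoped ComplexInnerProductSpace

set_option synthInstance.maxHeartbeats 1000000
set_option maxHeartbeats 1000000

/-- `θ = ω - ω̄`. -/
noncomputable def θ : ℂ := ω - starRingEnd ℂ ω

/-- The `ω`-reflection in a vector `x`:  `φ_x(y) = y - (1-ω)(⟨x,y⟩/|x|²)x`. -/
noncomputable def omegaRefl {V : Type*} [NormedAddCommGroup V] [InnerProductSpace ℂ V]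
    (x : V) : V → V :=
  fun y => y - ((1 - ω) * (⟪x, y⟫ / ⟪x, x⟫)) • x

lemma omega_eq : ω = ⟨-1/2, Real.sqrt 3 / 2⟩ := by
  have h : (2 * Real.pi * Complex.I / 3 : ℂ) = ((2 * Real.pi / 3 : ℝ) : ℂ) * Complex.I := by
    push_cast; ring
  have h2 : (2 * Real.pi / 3 : ℝ) = Real.pi - Real.pi / 3 := by ring
  unfold ω
  rw [h]
  apply Complex.ext
  · rw [Complex.exp_ofReal_mul_I_re, h2, Real.cos_pi_sub, Real.cos_pi_div_three]; norm_num
  · rw [Complex.exp_ofReal_mul_I_im, h2, Real.sin_pi_sub, Real.sin_pi_div_three]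

lemma sqrt3 : Real.sqrt 3 * Real.sqrt 3 = 3 := Real.mul_self_sqrt (by norm_num)

lemma omega_quad : ω * ω = -1 - ω := by
  have := sqrt3
  rw [omega_eq]
  apply Complex.ext <;> simp <;> linarith

lemma normSq_theta : Complex.normSq θ = 3 := by
  have := sqrt3
  unfold θ
  rw [omega_eq]
  simp [Complex.normSq_apply]

lemma eis_form {a : ℂ} (ha : a ∈ Eis) : ∃ m n : ℤ, a = m + n * ω := by
  unfold Eis at ha
  induction ha using Subring.closure_induction with
  | mem x hx => exact ⟨0, 1, by simpa using hx⟩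
  | zero => exact ⟨0, 0, by simp⟩
  | one => exact ⟨1, 0, by simp⟩
  | add x y _ _ hx hy =>
    obtain ⟨m, n, rfl⟩ := hx
    obtain ⟨k, l, rfl⟩ := hy
    exact ⟨m + k, n + l, by push_cast; ring⟩
  | neg x _ hx =>
    obtain ⟨m, n, rfl⟩ := hx
    exact ⟨-m, -n, by push_cast; ring⟩
  | mul x y _ _ hx hy =>
    obtain ⟨m, n, rfl⟩ := hx
    obtain ⟨k, l, rfl⟩ := hy
    refine ⟨m * k - n * l, m * l + n * k - n * l, ?_⟩
    push_cast
    linear_combination (n * l : ℂ) * omega_quad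

lemma normSq_eis (m n : ℤ) :
    Complex.normSq ((m : ℂ) + n * ω) = ((m * m - m * n + n * n : ℤ) : ℝ) := by
  have := sqrt3
  rw [omega_eq]
  simp [Complex.normSq_apply]
  linear_combination (n * n / 4 : ℝ) * this

lemma conj_mem (m n : ℤ) : (starRingEnd ℂ) ((m : ℂ) + n * ω) ∈ Eis := by
  have h : (starRingEnd ℂ) ((m : ℂ) + n * ω) = ((m - n : ℤ) : ℂ) - (n : ℤ) * ω := by
    rw [omega_eq]
    apply Complex.ext <;> simp <;> ring
  rw [h]
  exact sub_mem (intCast_mem _ _) (mul_mem (intCast_mem _ _) (Subring.subset_closure rfl))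

lemma int_cases {m n : ℤ} (h : m * m - m * n + n * n < 3) :
    (m = 0 ∧ n = 0) ∨ m * m - m * n + n * n = 1 := by
  have h1 : m ≤ 1 := by nlinarith [sq_nonneg (m - 2 * n)]
  have h2 : -1 ≤ m := by nlinarith [sq_nonneg (m - 2 * n)]
  have h3 : n ≤ 1 := by nlinarith [sq_nonneg (n - 2 * m)]
  have h4 : -1 ≤ n := by nlinarith [sq_nonneg (n - 2 * m)]
  interval_cases m <;> interval_cases n <;> simp_all

lemma strict_cs {V : Type*} [NormedAddCommGroup V] [InnerProductSpace ℂ V]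
    (x y : V) (hind : LinearIndependent ℂ ![x, y])
    (hx : ⟪x, x⟫ = 3) (hy : ⟪y, y⟫ = 3) : Complex.normSq ⟪x, y⟫ < 9 := by
  have hz : (3 : ℂ) • y - ⟪x, y⟫ • x ≠ 0 := by
    intro h
    have := LinearIndependent.pair_iff.1 hind (-⟪x, y⟫) 3 (by rw [← h]; module)
    norm_num at this
  have hc : ⟪y, x⟫ = starRingEnd ℂ ⟪x, y⟫ := (inner_conj_symm y x).symm
  have h1 : ⟪(3 : ℂ) • y - ⟪x, y⟫ • x, (3 : ℂ) • y - ⟪x, y⟫ • x⟫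
      = ((27 - 3 * Complex.normSq ⟪x, y⟫ : ℝ) : ℂ) := by
    have := Complex.mul_conj ⟪x, y⟫
    simp only [inner_sub_left, inner_sub_right, inner_smul_left, inner_smul_right, hx, hy, hc,
      map_ofNat]
    push_cast
    rw [← this]
    ring
  have h2 := (inner_self_eq_norm_sq_to_K (𝕜 := ℂ) ((3 : ℂ) • y - ⟪x, y⟫ • x)).symm.trans h1
  have h3 : ‖(3 : ℂ) • y - ⟪x, y⟫ • x‖ ^ 2 = 27 - 3 * Complex.normSq ⟪x, y⟫ := by
    apply Complex.ofReal_injective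
    rw [Complex.ofReal_pow]
    exact h2
  have h4 : 0 < ‖(3 : ℂ) • y - ⟪x, y⟫ • x‖ ^ 2 := by positivity
  linarith

theorem commute_or_braid
    {V : Type*} [NormedAddCommGroup V] [InnerProductSpace ℂ V]
    (x y : V) (hind : LinearIndependent ℂ ![x, y])
    (hx : ⟪x, x⟫ = 3) (hy : ⟪y, y⟫ = 3)
    (hxy : ∃ a ∈ Eis, ⟪x, y⟫ = θ * a) :
    Xor'
      (⟪x, y⟫ = 0 ∧ omegaRefl x ∘ omegaRefl y = omegaRefl y ∘ omegaRefl x)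
      ((Complex.normSq ⟪x, y⟫ = 3 ∧
        ∃ e ∈ Eis, (∃ f ∈ Eis, e * f = 1) ∧ ⟪x, y⟫ = θ * e) ∧
       omegaRefl x ∘ omegaRefl y ∘ omegaRefl x =
         omegaRefl y ∘ omegaRefl x ∘ omegaRefl y) := by
  obtain ⟨a, ha, hxa⟩ := hxy
  obtain ⟨m, n, rfl⟩ := eis_form ha
  have hlt := strict_cs x y hind hx hy
  have hN : Complex.normSq ⟪x, y⟫ = 3 * ((m * m - m * n + n * n : ℤ) : ℝ) := by
    rw [hxa, map_mul, normSq_theta, normSq_eis]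
  have hlt' : m * m - m * n + n * n < 3 := by
    have : ((m * m - m * n + n * n : ℤ) : ℝ) < (3 : ℤ) := by push_cast at *; linarith
    exact_mod_cast this
  have hc : ⟪y, x⟫ = starRingEnd ℂ ⟪x, y⟫ := (inner_conj_symm y x).symm
  rcases int_cases hlt' with ⟨rfl, rfl⟩ | h1
  · have h0 : ⟪x, y⟫ = 0 := by rw [hxa]; simp
    have h0' : ⟪y, x⟫ = 0 := by rw [hc, h0]; simp
    left
    refine ⟨⟨h0, ?_⟩, ?_⟩
    · funext v
      simp only [omegaRefl, Function.comp, inner_sub_right, inner_smul_right, hx, hy, h0, h0']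
      module
    · rintro ⟨⟨h, -⟩, -⟩
      rw [h0] at h
      norm_num at h
  · rw [h1] at hN
    have h3 : Complex.normSq ⟪x, y⟫ = 3 := by rw [hN]; norm_num
    have hcc : ⟪x, y⟫ * ⟪y, x⟫ = 3 := by
      rw [hc, Complex.mul_conj, h3]; norm_num
    right
    refine ⟨⟨⟨h3, _, ha, ⟨_, conj_mem m n, ?_⟩, hxa⟩, ?_⟩, ?_⟩
    · rw [Complex.mul_conj, normSq_eis, h1]; norm_num
    · funext v
      simp only [omegaRefl, Function.comp, inner_sub_right, inner_smul_right, hx, hy]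
      generalize ⟪x, y⟫ = c at *
      generalize ⟪y, x⟫ = d at *
      generalize ⟪x, v⟫ = p
      generalize ⟪y, v⟫ = q
      have hw := omega_quad
      generalize ω = w at *
      match_scalars
      · ring
      · linear_combination (-((1 - w) / 3 * p / 3)) * hw - ((1 - w) / 3) ^ 3 * p * hcc
      · linear_combination ((1 - w) / 3 * q / 3) * hw + ((1 - w) / 3) ^ 3 * q * hcc
    · rintro ⟨h, -⟩
      rw [h] at h3
      norm_num at h3
end
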